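/- For every z ∈ ℂ, det(z·I − J_cs) · det(z·I − J^D_cs) = ( ∏_{i=1}^{n0} a(i) )² · R(z) · ( R(z) − 2 ) (all polynomials with real coefficients evaluated at complex z). Consequently, z is an eigenvalue of J_cs or of J^D_cs if and only if R(z) ∈ {0, 2}. -/

import Mathlib

open Polynomial

/-- The `(n0+1) × (n0+1)` centrosymmetric tridiagonal Jacobi matrix. -/
noncomputable def Jcs (n0 : ℕ) (a b : ℕ → ℝ) :
    Matrix (Fin (n0 + 1)) (Fin (n0 + 1)) ℝ :=
  Matrix.of fun i j =>
    if (j : ℕ) = (i : ℕ) then b (i : ℕ)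
    else if (j : ℕ) = (i : ℕ) + 1 then a ((i : ℕ) + 1)
    else if (i : ℕ) = (j : ℕ) + 1 then a (n0 - (j : ℕ))
    else 0

/-- The `(n0−1) × (n0−1)` Dirichlet restriction of `Jcs`, obtained by deleting the
first and last rows and columns. -/
noncomputable def JDcs (n0 : ℕ) (a b : ℕ → ℝ) :
    Matrix (Fin (n0 - 1)) (Fin (n0 - 1)) ℝ :=
  Matrix.of fun i j =>
    Jcs n0 a b ⟨(i : ℕ) + 1, by have := i.isLt; omega⟩ ⟨(j : ℕ) + 1, by have := j.isLt; omega⟩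

/-!
Write `T_k` for the leading `k × k` block of `J_cs`, so that `P_k` is the characteristic polynomial
of `T_k`, and `S_k` for the block of size `k` starting at row and column `1`. The expansion of
tridiagonal determinants along the last row gives, by induction, the condensation identity
`det T_{n+2} * det S_n = det T_{n+1} * det S_{n+1} - ∏ (products of opposite off-diagonal entries)`.
When `T_{n+2}` is centrosymmetric, reversing the order of the basis turns `S_{n+1}` into `T_{n+1}`,
and the product becomes the square of the product of the superdiagonal. Applied to `z - J_cs`, the
right-hand side is the difference of squares `P_{n0}(z) ^ 2 - (∏ a(i)) ^ 2`, and its two factors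
are, up to the factor `∏ a(i)` and sign, `R(z)` and `R(z) - 2`.
-/

/-- The `n × n` tridiagonal matrix with diagonal `c 0, …, c (n - 1)`, superdiagonal
`u 0, …, u (n - 2)` and subdiagonal `l 0, …, l (n - 2)`. The entries are taken from sequences, so
that the leading blocks of a tridiagonal matrix are obtained by lowering `n`, and the trailing ones
by shifting the sequences. -/
def tridiagonal {R : Type*} [Zero R] (c u l : ℕ → R) (n : ℕ) : Matrix (Fin n) (Fin n) R :=
  Matrix.of fun i j =>
    if (j : ℕ) = i then c i
    else if (j : ℕ) = i + 1 then u i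
    else if (i : ℕ) = j + 1 then l j
    else 0

section

variable {R : Type*} [CommRing R]

theorem tridiagonal_apply_eq_zero (c u l : ℕ → R) {n : ℕ} {i j : Fin n}
    (h : (j : ℕ) + 1 < i ∨ (i : ℕ) + 1 < j) : tridiagonal c u l n i j = 0 := by
  simp only [tridiagonal, Matrix.of_apply]
  grind

theorem det_submatrix_tridiagonal_last_penultimate (c u l : ℕ → R) (n : ℕ) :
    ((tridiagonal c u l (n + 2)).submatrix (Fin.last _).succAbove
      (Fin.last n).castSucc.succAbove).det = u n * (tridiagonal c u l n).det := by
  set M := (tridiagonal c u l (n + 2)).submatrix (Fin.last _).succAbove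
    (Fin.last n).castSucc.succAbove with hM
  have last_column (i : Fin n) : M i.castSucc (Fin.last n) = 0 :=
    tridiagonal_apply_eq_zero c u l (.inr (by simp))
  have corner : M (Fin.last n) (Fin.last n) = u n := by
    simp [hM, tridiagonal]
  have leading_block : M.submatrix (Fin.last n).succAbove (Fin.last n).succAbove =
      tridiagonal c u l n := by
    ext i j
    simp [hM, tridiagonal, Fin.succAbove, Fin.lt_def]
  simp only [Matrix.det_succ_column M (Fin.last n), Fin.sum_univ_castSucc, last_column, corner,
    leading_block, mul_zero, zero_mul, Finset.sum_const_zero, zero_add, ← two_mul, pow_mul,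
    neg_one_sq, one_pow, one_mul]

theorem det_tridiagonal_add_two (c u l : ℕ → R) (n : ℕ) :
    (tridiagonal c u l (n + 2)).det =
      c (n + 1) * (tridiagonal c u l (n + 1)).det - u n * l n * (tridiagonal c u l n).det := by
  have leading_block : (tridiagonal c u l (n + 2)).submatrix (Fin.last _).succAbove
      (Fin.last _).succAbove = tridiagonal c u l (n + 1) := by
    ext i j
    simp [tridiagonal]
  have last_row (j : Fin n) :
      tridiagonal c u l (n + 2) (Fin.last _) j.castSucc.castSucc = 0 :=
    tridiagonal_apply_eq_zero c u l (.inl (by simp))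
  have last_row_penultimate :
      tridiagonal c u l (n + 2) (Fin.last _) (Fin.last n).castSucc = l n := by
    simp [tridiagonal, show n ≠ n + 1 + 1 by lia]
  have last_row_last : tridiagonal c u l (n + 2) (Fin.last _) (Fin.last _) = c (n + 1) := by
    simp [tridiagonal]
  have sign_penultimate : (-1 : R) ^ (n + 1 + n) = -1 := Odd.neg_one_pow ⟨n, by ring⟩
  have sign_last : (-1 : R) ^ (n + 1 + (n + 1)) = 1 := Even.neg_one_pow ⟨n + 1, rfl⟩
  simp only [Matrix.det_succ_row _ (Fin.last (n + 1)), Fin.sum_univ_castSucc, last_row,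
    last_row_penultimate, last_row_last, leading_block,
    det_submatrix_tridiagonal_last_penultimate, Fin.val_last, Fin.val_castSucc, sign_penultimate,
    sign_last, mul_zero, zero_mul, Finset.sum_const_zero]
  ring

theorem det_tridiagonal_mul_det_tridiagonal_shift (c u l : ℕ → R) (n : ℕ) :
    (tridiagonal c u l (n + 2)).det *
        (tridiagonal (fun i => c (i + 1)) (fun i => u (i + 1)) (fun i => l (i + 1)) n).det =
      (tridiagonal c u l (n + 1)).det *
          (tridiagonal (fun i => c (i + 1)) (fun i => u (i + 1)) (fun i => l (i + 1)) (n + 1)).det -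
        ∏ i ∈ Finset.range (n + 1), u i * l i := by
  induction n with
  | zero =>
    rw [det_tridiagonal_add_two]
    simp [tridiagonal, mul_comm]
  | succ n ih =>
    rw [Finset.prod_range_succ, det_tridiagonal_add_two c u l (n + 1),
      det_tridiagonal_add_two (fun i => c (i + 1)) _ _ n]
    linear_combination u (n + 1) * l (n + 1) * ih

theorem det_tridiagonal_eq_of_reverse {c u l c' u' l' : ℕ → R} {n : ℕ}
    (hc : ∀ i j, i + j + 1 = n → c' i = c j) (hu : ∀ i j, i + j + 2 = n → u' i = l j)
    (hl : ∀ i j, i + j + 2 = n → l' i = u j) :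
    (tridiagonal c' u' l' n).det = (tridiagonal c u l n).det := by
  rw [← Matrix.det_submatrix_equiv_self Fin.revPerm (tridiagonal c u l n)]
  congr 1
  ext i j
  have := i.isLt
  have := j.isLt
  simp only [tridiagonal, Matrix.of_apply, Matrix.submatrix_apply, Fin.revPerm_apply, Fin.val_rev]
  grind

theorem det_tridiagonal_mul_det_interior_of_centrosymmetric {c u l : ℕ → R} {n : ℕ}
    (hc : ∀ i j, i + j = n + 1 → c i = c j) (hul : ∀ i j, i + j = n → u i = l j) :
    (tridiagonal c u l (n + 2)).det *
        (tridiagonal (fun i => c (i + 1)) (fun i => u (i + 1)) (fun i => l (i + 1)) n).det =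
      (tridiagonal c u l (n + 1)).det ^ 2 - (∏ i ∈ Finset.range (n + 1), u i) ^ 2 := by
  have det_shift :
      (tridiagonal (fun i => c (i + 1)) (fun i => u (i + 1)) (fun i => l (i + 1)) (n + 1)).det =
        (tridiagonal c u l (n + 1)).det :=
    det_tridiagonal_eq_of_reverse (fun _ _ h => hc _ _ (by lia)) (fun _ _ h => hul _ _ (by lia))
      fun _ _ h => (hul _ _ (by lia)).symm
  have prod_lower : ∏ i ∈ Finset.range (n + 1), l i = ∏ i ∈ Finset.range (n + 1), u i := by
    rw [← Finset.prod_range_reflect]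
    refine Finset.prod_congr rfl fun i hi => (hul _ _ ?_).symm
    have := Finset.mem_range.mp hi
    lia
  rw [det_tridiagonal_mul_det_tridiagonal_shift, det_shift, Finset.prod_mul_distrib, prod_lower,
    sq, sq]

theorem charmatrix_tridiagonal (c u l : ℕ → R) (n : ℕ) :
    (tridiagonal c u l n).charmatrix =
      tridiagonal (fun i => X - C (c i)) (fun i => -C (u i)) (fun i => -C (l i)) n := by
  ext1 i j
  rw [Matrix.charmatrix_apply, Matrix.diagonal_apply]
  simp only [tridiagonal, Matrix.of_apply, Fin.ext_iff]
  grind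

theorem charpoly_tridiagonal_add_two (c u l : ℕ → R) (n : ℕ) :
    (tridiagonal c u l (n + 2)).charpoly =
      (X - C (c (n + 1))) * (tridiagonal c u l (n + 1)).charpoly -
        C (u n * l n) * (tridiagonal c u l n).charpoly := by
  simp only [Matrix.charpoly, charmatrix_tridiagonal, det_tridiagonal_add_two, neg_mul_neg, C_mul]

theorem charpoly_tridiagonal_eq_of_recurrence {c u l : ℕ → R} {P : ℕ → R[X]} {N : ℕ}
    (hP0 : P 0 = 1) (hP1 : P 1 = X - C (c 0))
    (hP : ∀ k, k + 2 ≤ N → P (k + 2) = (X - C (c (k + 1))) * P (k + 1) - C (u k * l k) * P k) :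
    ∀ k ≤ N, (tridiagonal c u l k).charpoly = P k
  | 0, _ => by rw [hP0, Matrix.charpoly, Matrix.det_isEmpty]
  | 1, _ => by simp [hP1, Matrix.charpoly, tridiagonal]
  | k + 2, hk => by
    rw [charpoly_tridiagonal_add_two, hP k hk,
      charpoly_tridiagonal_eq_of_recurrence hP0 hP1 hP (k + 1) (by lia),
      charpoly_tridiagonal_eq_of_recurrence hP0 hP1 hP k (by lia)]

theorem charpoly_tridiagonal_mul_charpoly_interior_of_centrosymmetric {c u l : ℕ → R} {n : ℕ}
    (hc : ∀ i j, i + j = n + 1 → c i = c j) (hul : ∀ i j, i + j = n → u i = l j) :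
    (tridiagonal c u l (n + 2)).charpoly *
        (tridiagonal (fun i => c (i + 1)) (fun i => u (i + 1)) (fun i => l (i + 1)) n).charpoly =
      (tridiagonal c u l (n + 1)).charpoly ^ 2 - C (∏ i ∈ Finset.range (n + 1), u i) ^ 2 := by
  have prod_neg_sq : (∏ i ∈ Finset.range (n + 1), -C (u i)) ^ 2 =
      C (∏ i ∈ Finset.range (n + 1), u i) ^ 2 := by
    rw [Finset.prod_neg, mul_pow, ← pow_mul, pow_mul', neg_one_sq, one_pow, one_mul, map_prod]
  simp only [Matrix.charpoly, charmatrix_tridiagonal]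
  rw [← prod_neg_sq]
  exact det_tridiagonal_mul_det_interior_of_centrosymmetric (fun i j h => by rw [hc i j h])
    fun i j h => by rw [hul i j h]

theorem det_smul_one_sub_map_algebraMap {S ι : Type*} [CommRing S] [Algebra R S] [Fintype ι]
    [DecidableEq ι] (M : Matrix ι ι R) (z : S) :
    (z • (1 : Matrix ι ι S) - M.map (algebraMap R S)).det = aeval z M.charpoly := by
  rw [aeval_def, ← eval_map, ← Matrix.charpoly_map, Matrix.eval_charpoly, Matrix.scalar_apply,
    Matrix.smul_one_eq_diagonal]

theorem charpoly_centrosymmetricJacobi_mul_charpoly_interior {n0 : ℕ} (hn0 : 1 ≤ n0)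
    {a b : ℕ → R} (hb : ∀ j, j ≤ n0 → b j = b (n0 - j))
    {P : ℕ → R[X]} (hP0 : P 0 = 1) (hP1 : P 1 = X - C (b 0))
    (hP : ∀ k, 2 ≤ k → k ≤ n0 + 1 →
      P k = (X - C (b (k - 1))) * P (k - 1) - C (a (k - 1) * a (n0 + 2 - k)) * P (k - 2)) :
    (tridiagonal b (fun i => a (i + 1)) (fun i => a (n0 - i)) (n0 + 1)).charpoly *
        (tridiagonal (fun i => b (i + 1)) (fun i => a (i + 2)) (fun i => a (n0 - (i + 1)))
          (n0 - 1)).charpoly =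
      P n0 ^ 2 - C (∏ i ∈ Finset.Icc 1 n0, a i) ^ 2 := by
  obtain ⟨n, rfl⟩ : ∃ n, n0 = n + 1 := ⟨n0 - 1, by lia⟩
  have charpoly_leading : (tridiagonal b (fun i => a (i + 1)) (fun i => a (n + 1 - i))
      (n + 1)).charpoly = P (n + 1) := by
    refine charpoly_tridiagonal_eq_of_recurrence hP0 hP1 (fun k hk => ?_) (n + 1) le_rfl
    rw [hP (k + 2) (by lia) (by lia), Nat.add_sub_add_right]
    rfl
  have prod_shift : ∏ i ∈ Finset.range (n + 1), a (i + 1) = ∏ i ∈ Finset.Icc 1 (n + 1), a i := by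
    rw [Finset.range_eq_Ico, Finset.prod_Ico_add' a 0 (n + 1) 1]
    rfl
  rw [← charpoly_leading, ← prod_shift]
  refine charpoly_tridiagonal_mul_charpoly_interior_of_centrosymmetric (fun i j h => ?_)
    fun i j h => ?_
  · rw [hb i (by lia), show n + 1 - i = j by lia]
  · rw [show n + 1 - j = i + 1 by lia]

end

theorem Jcs_eq_tridiagonal (n0 : ℕ) (a b : ℕ → ℝ) :
    Jcs n0 a b = tridiagonal b (fun i => a (i + 1)) (fun i => a (n0 - i)) (n0 + 1) :=
  rfl

theorem JDcs_eq_tridiagonal (n0 : ℕ) (a b : ℕ → ℝ) :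
    JDcs n0 a b = tridiagonal (fun i => b (i + 1)) (fun i => a (i + 2))
      (fun i => a (n0 - (i + 1))) (n0 - 1) := by
  ext i j
  simp [JDcs, Jcs, tridiagonal]

theorem statement_8_general {K L : Type*} [Field K] [Field L] [Algebra K L] (n0 : ℕ)
    (hn0 : 1 ≤ n0) (a b : ℕ → K) (ha : ∀ i, 1 ≤ i → i ≤ n0 → a i ≠ 0)
    (hb : ∀ j, j ≤ n0 → b j = b (n0 - j))
    (P : ℕ → K[X]) (hP0 : P 0 = 1) (hP1 : P 1 = X - C (b 0))
    (hP : ∀ k, 2 ≤ k → k ≤ n0 + 1 →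
      P k = (X - C (b (k - 1))) * P (k - 1) - C (a (k - 1) * a (n0 + 2 - k)) * P (k - 2)) :
    let J := (tridiagonal b (fun i => a (i + 1)) (fun i => a (n0 - i)) (n0 + 1)).map
      (algebraMap K L)
    let JD := (tridiagonal (fun i => b (i + 1)) (fun i => a (i + 2)) (fun i => a (n0 - (i + 1)))
      (n0 - 1)).map (algebraMap K L)
    let A := ∏ i ∈ Finset.Icc 1 n0, algebraMap K L (a i)
    (∀ z : L, (z • 1 - J).det * (z • 1 - JD).det =
      A ^ 2 * (1 - aeval z (P n0) / A) * (1 - aeval z (P n0) / A - 2)) ∧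
    ∀ z : L, ((z • 1 - J).det = 0 ∨ (z • 1 - JD).det = 0) ↔
      1 - aeval z (P n0) / A ∈ ({0, 2} : Set L) := by
  intro J JD A
  have hA : A ≠ 0 := Finset.prod_ne_zero_iff.mpr fun i hi =>
    (_root_.map_ne_zero _).mpr (ha i (Finset.mem_Icc.mp hi).1 (Finset.mem_Icc.mp hi).2)
  have det_mul_det (z : L) : (z • 1 - J).det * (z • 1 - JD).det =
      A ^ 2 * (1 - aeval z (P n0) / A) * (1 - aeval z (P n0) / A - 2) := by
    calc (z • 1 - J).det * (z • 1 - JD).det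
        = aeval z (P n0) ^ 2 - A ^ 2 := by
          rw [det_smul_one_sub_map_algebraMap, det_smul_one_sub_map_algebraMap, ← map_mul,
            charpoly_centrosymmetricJacobi_mul_charpoly_interior hn0 hb hP0 hP1 hP]
          simp [A]
      _ = A ^ 2 * (1 - aeval z (P n0) / A) * (1 - aeval z (P n0) / A - 2) := by
          field_simp
          ring
  refine ⟨det_mul_det, fun z => ?_⟩
  rw [← mul_eq_zero, det_mul_det, mul_assoc, mul_eq_zero, mul_eq_zero, sub_eq_zero (b := (2 : L))]
  simp only [pow_eq_zero_iff two_ne_zero, hA, false_or, Set.mem_insert_iff, Set.mem_singleton_iff]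

/-- For every `z ∈ ℂ`,
`det(z·I − J_cs) · det(z·I − J^D_cs) = (∏ a(i))² · R(z) · (R(z) − 2)`, where
`R(z) = 1 − P_{n0}(z)/∏ a(i)`; consequently `z` is an eigenvalue of `J_cs` or of
`J^D_cs` iff `R(z) ∈ {0, 2}`. -/
theorem statement_8 (n0 : ℕ) (hn0 : 2 ≤ n0) (a b : ℕ → ℝ)
    (ha : ∀ i, 1 ≤ i → i ≤ n0 → a i ≠ 0)
    (hb : ∀ j, j ≤ n0 → b j = b (n0 - j))
    (P : ℕ → Polynomial ℝ)
    (hP0 : P 0 = 1) (hP1 : P 1 = X - C (b 0))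
    (hP : ∀ k, 2 ≤ k → k ≤ n0 + 1 →
      P k = (X - C (b (k - 1))) * P (k - 1) - C (a (k - 1) * a (n0 + 2 - k)) * P (k - 2))
    (PD : ℕ → Polynomial ℝ)
    (hPD0 : PD 0 = 1) (hPD1 : PD 1 = X - C (b 1))
    (hPD : ∀ k, 2 ≤ k → k ≤ n0 - 1 →
      PD k = (X - C (b k)) * PD (k - 1) - C (a k * a (n0 + 1 - k)) * PD (k - 2)) :
    (∀ z : ℂ,
      (z • (1 : Matrix (Fin (n0 + 1)) (Fin (n0 + 1)) ℂ) - (Jcs n0 a b).map Complex.ofReal).det *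
        (z • (1 : Matrix (Fin (n0 - 1)) (Fin (n0 - 1)) ℂ) - (JDcs n0 a b).map Complex.ofReal).det
      = (∏ i ∈ Finset.Icc 1 n0, (a i : ℂ)) ^ 2 *
          (1 - Polynomial.aeval z (P n0) / ∏ i ∈ Finset.Icc 1 n0, (a i : ℂ)) *
          ((1 - Polynomial.aeval z (P n0) / ∏ i ∈ Finset.Icc 1 n0, (a i : ℂ)) - 2)) ∧
    (∀ z : ℂ,
      ((z • (1 : Matrix (Fin (n0 + 1)) (Fin (n0 + 1)) ℂ) -
          (Jcs n0 a b).map Complex.ofReal).det = 0 ∨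
        (z • (1 : Matrix (Fin (n0 - 1)) (Fin (n0 - 1)) ℂ) -
          (JDcs n0 a b).map Complex.ofReal).det = 0) ↔
      (1 - Polynomial.aeval z (P n0) / ∏ i ∈ Finset.Icc 1 n0, (a i : ℂ)) ∈ ({0, 2} : Set ℂ)) := by
  simp only [Jcs_eq_tridiagonal, JDcs_eq_tridiagonal]
  exact statement_8_general n0 (by lia) a b ha hb P hP0 hP1 hP
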